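/- Let f be C²-smooth on an open neighbourhood of S^{n-1} with ∫ f dσ_{n-1} = 0 and ‖f''_S(θ)‖ ≤ 1 for every θ ∈ S^{n-1}. Then log ∫ exp{ ((n−1)/2) f } dσ_{n-1} ≤ ((n−1)/2) ∫ |∇_S f|² dσ_{n-1}. -/

import Mathlib

open MeasureTheory Metric Filter
open scoped RealInnerProductSpace ENNReal NNReal

noncomputable section

namespace SecondOrderConc

/-- Euclidean space ℝⁿ. -/
abbrev E (n : ℕ) : Type := EuclideanSpace ℝ (Fin n)

/-- The uniform (normalized rotation-invariant) probability measure `σ_{n-1}`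
on the unit sphere `S^{n-1}`, viewed as a measure on the ambient space ℝⁿ. -/
def sphMeasure (n : ℕ) : Measure (E n) :=
  ((((volume : Measure (E n)).toSphere).map Subtype.val) Set.univ)⁻¹ •
    (((volume : Measure (E n)).toSphere).map Subtype.val)

variable {n : ℕ}

/-- Euclidean Hessian of `f` at `x`, as a continuous linear operator on ℝⁿ. -/
def hess (f : E n → ℝ) (x : E n) : E n →L[ℝ] E n :=
  fderiv ℝ (gradient f) x

/-- Squared Hilbert–Schmidt norm of an operator on ℝⁿ. -/
def hsNormSq (A : E n →L[ℝ] E n) : ℝ :=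
  ∑ i : Fin n, ‖A (EuclideanSpace.single i 1)‖ ^ 2

/-- Orthogonal projection of ℝⁿ onto `θ^⊥` (for a unit vector `θ`). -/
def projPerp (θ : E n) : E n →L[ℝ] E n :=
  ContinuousLinearMap.id ℝ (E n) - (innerSL ℝ θ).smulRight θ

/-- Spherical gradient `∇_S f(θ) = ∇f(θ) − ⟨∇f(θ),θ⟩θ`. -/
def sgrad (f : E n → ℝ) (θ : E n) : E n :=
  gradient f θ - ⟪gradient f θ, θ⟫ • θ

/-- Spherical Hessian `f''_S(θ) = P_{θ^⊥} (f''(θ) − ⟨∇f(θ),θ⟩ I_n) P_{θ^⊥}`. -/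
def sHess (f : E n → ℝ) (θ : E n) : E n →L[ℝ] E n :=
  (projPerp θ).comp
    ((hess f θ - ⟪gradient f θ, θ⟫ • ContinuousLinearMap.id ℝ (E n)).comp (projPerp θ))

/-- Spherical Laplacian `Δ_S f(θ) = Tr f''_S(θ)`. -/
def sLap (f : E n → ℝ) (θ : E n) : ℝ :=
  LinearMap.trace ℝ (E n) (sHess f θ).toLinearMap

/-- Euclidean Laplacian `Δ f = Tr f''`. -/
def eLap (f : E n → ℝ) (x : E n) : ℝ :=
  LinearMap.trace ℝ (E n) (hess f x).toLinearMap

/-- 0-homogeneous extension to `ℝⁿ \ {0}` of (the restriction to the sphere of) `g`. -/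
def ext0 (g : E n → ℝ) : E n → ℝ := fun x => g (‖x‖⁻¹ • x)

/-!
A bound `‖f''_S‖ ≤ 1` gives a Taylor estimate along great circles. Together with `cos x ≤ e^{-x²/2}`
it shows that, for `0 ≤ s < 1`, the star body with radial function `exp (s f)` has support function
at most `exp (s f + s² / (2 (1 - s)) |∇_S f|²)`. Urysohn's inequality, a consequence of the
Prékopa–Leindler inequality, therefore yields
`∫ exp (n s f) ≤ (∫ exp (s f + s² / (2 (1 - s)) |∇_S f|²)) ^ n`.
Letting `s → 0` gives the Poincaré inequality `(n - 1) ∫ f² ≤ ∫ |∇_S f|²`. Comparing `f` and its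
antipode with its maximum gives `f ≤ π² / 4`, and similarly `|∇_S f| ≤ π / 2`. At
`s = (n - 1) / (2 n)` the exponent on the right is thus bounded above, so a quadratic upper bound
for `exp` and the Poincaré inequality bound the right-hand side by `exp ((n - 1) / 2 ∫ |∇_S f|²)`.
-/

section PrekopaLeindler

open scoped Pointwise

theorem volume_add_volume_le_volume_add_of_isCompact {K L : Set ℝ} (hK : IsCompact K)
    (hL : IsCompact L) (hK₀ : K.Nonempty) (hL₀ : L.Nonempty) :
    volume K + volume L ≤ volume (K + L) := by
  obtain ⟨p, hpK, hp⟩ := hK.exists_isGreatest hK₀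
  obtain ⟨q, hqL, hq⟩ := hL.exists_isLeast hL₀
  have hdisj : AEDisjoint volume (q +ᵥ K) (p +ᵥ L) := by
    refine measure_mono_null (t := {p + q}) ?_ (by simp)
    rintro _ ⟨⟨x, hx, rfl⟩, ⟨y, hy, hxy⟩⟩
    have := hp hx
    have := hq hy
    simp only [vadd_eq_add, Set.mem_singleton_iff] at *
    linarith
  rw [← measure_vadd volume q K, ← measure_vadd volume p L,
    ← measure_union₀ (hL.vadd p).measurableSet.nullMeasurableSet hdisj]
  refine measure_mono (Set.union_subset ?_ ?_)
  · rintro _ ⟨x, hx, rfl⟩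
    exact ⟨x, hx, q, hqL, add_comm _ _⟩
  · rintro _ ⟨y, hy, rfl⟩
    exact ⟨p, hpK, y, hy, rfl⟩

theorem volume_add_volume_le_volume_add {A B : Set ℝ} (hA : MeasurableSet A)
    (hB : MeasurableSet B) (hA₀ : A.Nonempty) (hB₀ : B.Nonempty) :
    volume A + volume B ≤ volume (A + B) := by
  obtain ⟨a, ha⟩ := hA₀
  obtain ⟨b, hb⟩ := hB₀
  simp only [hA.measure_eq_iSup_isCompact, hB.measure_eq_iSup_isCompact, iSup_and']
  refine ENNReal.biSup_add_biSup_le' ⟨∅, by simp⟩ ⟨∅, by simp⟩ fun K hK L hL => ?_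
  calc volume K + volume L ≤ volume (insert a K) + volume (insert b L) := by
        gcongr <;> exact Set.subset_insert _ _
    _ ≤ volume (insert a K + insert b L) :=
        volume_add_volume_le_volume_add_of_isCompact (hK.2.insert a) (hL.2.insert b)
          (Set.insert_nonempty _ _) (Set.insert_nonempty _ _)
    _ ≤ volume (A + B) := measure_mono <|
        Set.add_subset_add (Set.insert_subset ha hK.1) (Set.insert_subset hb hL.1)

theorem lintegral_eq_setLIntegral_meas_ofReal_lt {α : Type*} [MeasurableSpace α] (μ : Measure α)
    [SFinite μ] {w : α → ℝ≥0∞} (hw : Measurable w) :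
    ∫⁻ x, w x ∂μ = ∫⁻ s in Set.Ioi (0 : ℝ), μ {x | ENNReal.ofReal s < w x} := by
  have hmeas : MeasurableSet {p : α × ℝ | ENNReal.ofReal p.2 < w p.1} :=
    measurableSet_lt (by fun_prop) (by fun_prop)
  have hfiber (c : ℝ≥0∞) : volume.restrict (Set.Ioi 0) {s : ℝ | ENNReal.ofReal s < c} = c := by
    have hset : {s : ℝ | ENNReal.ofReal s < c} ∩ Set.Ioi 0 =
        if c = ∞ then Set.Ioi 0 else Set.Ioo 0 c.toReal := by
      ext s
      split_ifs with hc
      · simp [hc]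
      · exact and_comm.trans <| and_congr_right fun hs : 0 < s =>
          ENNReal.ofReal_lt_iff_lt_toReal hs.le hc
    rw [Measure.restrict_apply' measurableSet_Ioi, hset]
    split_ifs with hc <;> simp [hc]
  have h₁ := Measure.prod_apply (μ := μ) (ν := volume.restrict (Set.Ioi (0 : ℝ))) hmeas
  rw [Measure.prod_apply_symm hmeas] at h₁
  simpa [Set.preimage, hfiber] using h₁.symm

theorem rpow_mul_rpow_le_mul_add_mul {a b : ℝ} (ha : 0 < a) (hb : 0 < b) (hab : a + b = 1)
    (x y : ℝ≥0∞) : x ^ a * y ^ b ≤ ENNReal.ofReal a * x + ENNReal.ofReal b * y := by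
  have h := ENNReal.young_inequality (x ^ a) (y ^ b) (p := a⁻¹) (q := b⁻¹)
    (Real.holderConjugate_iff.2 ⟨(one_lt_inv₀ ha).2 (by linarith), by simpa⟩)
  simpa [← ENNReal.rpow_mul, ha.ne', hb.ne', ENNReal.ofReal_inv_of_pos, ha, hb, div_eq_mul_inv,
    mul_comm] using h

/-- The Prékopa–Leindler inequality for the measure `μ`, in multiplicative form. As a property of
`μ` it passes to products and linear images, which reduces it to Lebesgue measure on `ℝ`. -/
def PrekopaLeindler {V : Type*} [AddCommMonoid V] [Module ℝ V] [MeasurableSpace V]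
    (μ : Measure V) : Prop :=
  ∀ ⦃a b : ℝ⦄, 0 < a → 0 < b → a + b = 1 → ∀ ⦃u v h : V → ℝ≥0∞⦄,
    Measurable u → Measurable v → Measurable h →
    (∀ x y, u x ^ a * v y ^ b ≤ h (a • x + b • y)) →
    (∫⁻ x, u x ∂μ) ^ a * (∫⁻ x, v x ∂μ) ^ b ≤ ∫⁻ x, h x ∂μ

section Real

variable {a b : ℝ} {u v h : ℝ → ℝ≥0∞}

theorem smul_superlevel_add_smul_superlevel_subset (ha : 0 < a) (hb : 0 < b) (hab : a + b = 1)
    (H : ∀ x y, u x ^ a * v y ^ b ≤ h (a • x + b • y)) (s : ℝ) :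
    a • {x | ENNReal.ofReal s < u x} + b • {x | ENNReal.ofReal s < v x} ⊆
      {x | ENNReal.ofReal s < h x} := by
  rintro _ ⟨_, ⟨x, hx, rfl⟩, _, ⟨y, hy, rfl⟩, rfl⟩
  calc ENNReal.ofReal s = ENNReal.ofReal s ^ a * ENNReal.ofReal s ^ b := by
        rw [← ENNReal.rpow_add_of_nonneg _ _ ha.le hb.le, hab, ENNReal.rpow_one]
    _ < u x ^ a * v y ^ b :=
        ENNReal.mul_lt_mul (ENNReal.rpow_lt_rpow hx ha) (ENNReal.rpow_lt_rpow hy hb)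
    _ ≤ h (a • x + b • y) := H x y

theorem mul_lintegral_add_mul_lintegral_le_of_iSup_eq (ha : 0 < a) (hb : 0 < b) (hab : a + b = 1)
    (hu : Measurable u) (hv : Measurable v) (hh : Measurable h) (huv : ⨆ x, u x = ⨆ x, v x)
    (H : ∀ x y, u x ^ a * v y ^ b ≤ h (a • x + b • y)) :
    ENNReal.ofReal a * (∫⁻ x, u x) + ENNReal.ofReal b * (∫⁻ x, v x) ≤ ∫⁻ x, h x := by
  have hvol {r : ℝ} (hr : 0 < r) (S : Set ℝ) : ENNReal.ofReal r * volume S = volume (r • S) := by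
    simp [Measure.addHaar_smul, abs_of_pos hr]
  have hmeas {w : ℝ → ℝ≥0∞} (hw : Measurable w) (s : ℝ) :
      MeasurableSet {x | ENNReal.ofReal s < w x} := measurableSet_lt measurable_const hw
  simp only [lintegral_eq_setLIntegral_meas_ofReal_lt volume, hu, hv, hh]
  rw [← lintegral_const_mul' _ _ ENNReal.ofReal_ne_top,
    ← lintegral_const_mul' _ _ ENNReal.ofReal_ne_top]
  refine (le_lintegral_add _ _).trans (lintegral_mono fun s => ?_)
  have hiff : {x | ENNReal.ofReal s < u x}.Nonempty ↔ {x | ENNReal.ofReal s < v x}.Nonempty := by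
    simp only [Set.Nonempty, Set.mem_ofPred_eq, ← lt_iSup_iff, huv]
  rcases Set.eq_empty_or_nonempty {x | ENNReal.ofReal s < u x} with hA | hA
  · have hB : {x | ENNReal.ofReal s < v x} = ∅ := by
      rwa [← Set.not_nonempty_iff_eq_empty, ← hiff, Set.not_nonempty_iff_eq_empty]
    simp [hA, hB]
  · simp only [hvol ha, hvol hb]
    exact (volume_add_volume_le_volume_add ((hmeas hu s).const_smul_of_ne_zero ha.ne')
      ((hmeas hv s).const_smul_of_ne_zero hb.ne') hA.smul_set (hiff.1 hA).smul_set).trans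
      (measure_mono (smul_superlevel_add_smul_superlevel_subset ha hb hab H s))

theorem rpow_lintegral_mul_rpow_lintegral_le_of_iSup_ne_top (ha : 0 < a) (hb : 0 < b)
    (hab : a + b = 1) (hu : Measurable u) (hv : Measurable v) (hh : Measurable h)
    (hu' : ⨆ x, u x ≠ ∞) (hv' : ⨆ x, v x ≠ ∞)
    (H : ∀ x y, u x ^ a * v y ^ b ≤ h (a • x + b • y)) :
    (∫⁻ x, u x) ^ a * (∫⁻ x, v x) ^ b ≤ ∫⁻ x, h x := by
  rcases eq_or_ne (⨆ x, u x) 0 with hu₀ | hu₀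
  · simp [ENNReal.iSup_eq_zero.1 hu₀, ha]
  rcases eq_or_ne (⨆ x, v x) 0 with hv₀ | hv₀
  · simp [ENNReal.iSup_eq_zero.1 hv₀, hb]
  set p := ⨆ x, u x
  set q := ⨆ x, v x
  have hpq : (p⁻¹) ^ a * (q⁻¹) ^ b ≠ 0 := by
    simp [ENNReal.rpow_eq_zero_iff, hu₀, hv₀, hu', hv']
  have hpq' : (p⁻¹) ^ a * (q⁻¹) ^ b ≠ ∞ := by
    simp [ENNReal.mul_eq_top, ENNReal.rpow_eq_top_iff, ENNReal.rpow_eq_zero_iff, hu₀, hv₀, hu', hv']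
  have hmul (x y : ℝ≥0∞) :
      (p⁻¹ * x) ^ a * (q⁻¹ * y) ^ b = (p⁻¹) ^ a * (q⁻¹) ^ b * (x ^ a * y ^ b) := by
    rw [ENNReal.mul_rpow_of_nonneg _ _ ha.le, ENNReal.mul_rpow_of_nonneg _ _ hb.le]
    ring
  have key := mul_lintegral_add_mul_lintegral_le_of_iSup_eq ha hb hab (hu.const_mul p⁻¹)
    (hv.const_mul q⁻¹) (hh.const_mul ((p⁻¹) ^ a * (q⁻¹) ^ b))
    (by rw [← ENNReal.mul_iSup, ← ENNReal.mul_iSup, ENNReal.inv_mul_cancel hu₀ hu',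
      ENNReal.inv_mul_cancel hv₀ hv'])
    fun x y => by rw [hmul]; gcongr; exact H x y
  rw [lintegral_const_mul _ hu, lintegral_const_mul _ hv, lintegral_const_mul _ hh] at key
  have key' := (rpow_mul_rpow_le_mul_add_mul ha hb hab _ _).trans key
  rwa [hmul, ENNReal.mul_le_mul_iff_right hpq hpq'] at key'

theorem tendsto_lintegral_min_natCast {α : Type*} [MeasurableSpace α] (μ : Measure α)
    {w : α → ℝ≥0∞} (hw : Measurable w) :
    Tendsto (fun N : ℕ => ∫⁻ x, min (w x) N ∂μ) atTop (nhds (∫⁻ x, w x ∂μ)) := by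
  refine lintegral_tendsto_of_tendsto_of_monotone
    (fun N => (hw.min measurable_const).aemeasurable)
    (Eventually.of_forall fun x M N hMN => by dsimp only; gcongr)
    (Eventually.of_forall fun x => ?_)
  simpa using (tendsto_const_nhds (x := w x)).min ENNReal.tendsto_nat_nhds_top

theorem prekopaLeindler_volume_real : PrekopaLeindler (volume : Measure ℝ) := by
  intro a b ha hb hab u v h hu hv hh H
  rcases eq_or_ne (∫⁻ x, u x) 0 with hu₀ | hu₀
  · simp [hu₀, ha]
  rcases eq_or_ne (∫⁻ x, v x) 0 with hv₀ | hv₀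
  · simp [hv₀, hb]
  refine le_of_tendsto' (ENNReal.Tendsto.mul
    ((tendsto_lintegral_min_natCast volume hu).ennrpow_const a)
    (.inl (by simp [ENNReal.rpow_eq_zero_iff, hu₀, ha.le]))
    ((tendsto_lintegral_min_natCast volume hv).ennrpow_const b)
    (.inl (by simp [ENNReal.rpow_eq_zero_iff, hv₀, hb.le]))) fun N => ?_
  have hfin (w : ℝ → ℝ≥0∞) : ⨆ x, min (w x) (N : ℝ≥0∞) ≠ ∞ :=
    ne_top_of_le_ne_top (ENNReal.natCast_ne_top N) (iSup_le fun x => min_le_right _ _)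
  refine rpow_lintegral_mul_rpow_lintegral_le_of_iSup_ne_top ha hb hab (hu.min measurable_const)
    (hv.min measurable_const) hh (hfin u) (hfin v) fun x y => le_trans ?_ (H x y)
  gcongr <;> exact min_le_left _ _

end Real

namespace PrekopaLeindler

variable {V W : Type*} [AddCommMonoid V] [Module ℝ V] [MeasurableSpace V]
  [AddCommMonoid W] [Module ℝ W] [MeasurableSpace W] {μ : Measure V} {ν : Measure W}

theorem prod [SFinite ν] (hμ : PrekopaLeindler μ) (hν : PrekopaLeindler ν) :
    PrekopaLeindler (μ.prod ν) := by
  intro a b ha hb hab u v h hu hv hh H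
  simp only [lintegral_prod _ hu.aemeasurable, lintegral_prod _ hv.aemeasurable,
    lintegral_prod _ hh.aemeasurable]
  exact hμ ha hb hab hu.lintegral_prod_right' hv.lintegral_prod_right' hh.lintegral_prod_right'
    fun x y => hν ha hb hab (hu.comp measurable_prodMk_left) (hv.comp measurable_prodMk_left)
      (hh.comp measurable_prodMk_left) fun z w => H (x, z) (y, w)

theorem map (hμ : PrekopaLeindler μ) (T : V →ₗ[ℝ] W) (hT : Measurable T) :
    PrekopaLeindler (μ.map T) := by
  intro a b ha hb hab u v h hu hv hh H
  simp only [lintegral_map hu hT, lintegral_map hv hT, lintegral_map hh hT]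
  exact hμ ha hb hab (hu.comp hT) (hv.comp hT) (hh.comp hT) fun x y => by
    simpa using H (T x) (T y)

theorem smul (hμ : PrekopaLeindler μ) (c : ℝ≥0∞) : PrekopaLeindler (c • μ) := by
  intro a b ha hb hab u v h hu hv hh H
  simp only [lintegral_smul_measure, smul_eq_mul]
  calc (c * ∫⁻ x, u x ∂μ) ^ a * (c * ∫⁻ x, v x ∂μ) ^ b
      = c ^ (a + b) * ((∫⁻ x, u x ∂μ) ^ a * (∫⁻ x, v x ∂μ) ^ b) := by
        rw [ENNReal.mul_rpow_of_nonneg _ _ ha.le, ENNReal.mul_rpow_of_nonneg _ _ hb.le,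
          ENNReal.rpow_add_of_nonneg _ _ ha.le hb.le]
        ring
    _ ≤ c * ∫⁻ x, h x ∂μ := by
        rw [hab, ENNReal.rpow_one]
        gcongr
        exact hμ ha hb hab hu hv hh H

theorem rpow_measure_mul_rpow_measure_le (hμ : PrekopaLeindler μ) {a b : ℝ} (ha : 0 < a)
    (hb : 0 < b) (hab : a + b = 1) {A B C : Set V} (hA : MeasurableSet A) (hB : MeasurableSet B)
    (hC : MeasurableSet C) (h : ∀ x ∈ A, ∀ y ∈ B, a • x + b • y ∈ C) :
    μ A ^ a * μ B ^ b ≤ μ C := by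
  simp only [← lintegral_indicator_one, hA, hB, hC]
  refine hμ ha hb hab (measurable_one.indicator hA) (measurable_one.indicator hB)
    (measurable_one.indicator hC) fun x y => ?_
  by_cases hx : x ∈ A <;> by_cases hy : y ∈ B
  · simp [hx, hy, h x hx y hy]
  all_goals simp [hx, hy, ha, hb]

end PrekopaLeindler

theorem prekopaLeindler_volume_pi (n : ℕ) : PrekopaLeindler (volume : Measure (Fin n → ℝ)) := by
  induction n with
  | zero =>
    intro a b _ _ _ u v h _ _ _ H
    simp only [lintegral_unique, volume_pi, Measure.pi_univ, Finset.univ_eq_empty,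
      Finset.prod_empty, mul_one]
    convert H default default
  | succ n ih =>
    have hmp : MeasurePreserving (Fin.consLinearEquiv ℝ fun _ : Fin (n + 1) => ℝ) := by
      convert (volume_preserving_piFinSuccAbove (fun _ : Fin (n + 1) => ℝ) 0).symm using 1
      ext p i
      refine Fin.cases ?_ (fun j => ?_) i <;> simp [MeasurableEquiv.piFinSuccAbove]
    rw [← hmp.map_eq]
    exact (prekopaLeindler_volume_real.prod ih).map
      (Fin.consLinearEquiv ℝ fun _ : Fin (n + 1) => ℝ).toLinearMap hmp.measurable

theorem prekopaLeindler_of_isAddHaarMeasure {V : Type*} [NormedAddCommGroup V] [NormedSpace ℝ V]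
    [FiniteDimensional ℝ V] [MeasurableSpace V] [BorelSpace V] (μ : Measure V)
    [μ.IsAddHaarMeasure] : PrekopaLeindler μ := by
  let e : (Fin (Module.finrank ℝ V) → ℝ) ≃L[ℝ] V :=
    ContinuousLinearEquiv.ofFinrankEq (by simp)
  have := e.isAddHaarMeasure_map volume
  rw [Measure.isAddLeftInvariant_eq_smul μ (volume.map e)]
  exact ((prekopaLeindler_volume_pi _).map e.toLinearEquiv.toLinearMap
    e.continuous.measurable).smul _

end PrekopaLeindler

section UniformSphere

open scoped Pointwise

variable {V : Type*} [NormedAddCommGroup V] [NormedSpace ℝ V] [MeasurableSpace V]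

/-- The uniform probability measure on the unit sphere of a nontrivial finite-dimensional normed
space with Haar measure `μ`: the normalised cone measure, as a measure on the subtype. -/
def uniformSphere (μ : Measure V) : Measure (sphere (0 : V) 1) :=
  (μ.toSphere Set.univ)⁻¹ • μ.toSphere

theorem sphMeasure_eq_map_uniformSphere (n : ℕ) :
    sphMeasure n = (uniformSphere (volume : Measure (E n))).map Subtype.val := by
  rw [sphMeasure, uniformSphere, Measure.map_smul,
    Measure.map_apply measurable_subtype_coe MeasurableSet.univ, Set.preimage_univ]

theorem integral_sphMeasure (g : E n → ℝ) : ∫ θ, g θ ∂sphMeasure n =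
    ∫ θ : sphere (0 : E n) 1, g θ ∂uniformSphere (volume : Measure (E n)) := by
  rw [sphMeasure_eq_map_uniformSphere]
  exact (MeasurableEmbedding.subtype_coe isClosed_sphere.measurableSet).integral_map g

variable [BorelSpace V] (μ : Measure V)

instance [Nontrivial V] [FiniteDimensional ℝ V] [μ.IsAddHaarMeasure] :
    IsProbabilityMeasure (uniformSphere μ) :=
  ⟨ENNReal.inv_mul_cancel (Measure.measure_univ_ne_zero.2 μ.toSphere_ne_zero)
    (measure_ne_top _ _)⟩

theorem measurePreserving_neg_uniformSphere [μ.IsNegInvariant] :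
    MeasurePreserving (fun θ : sphere (0 : V) 1 => -θ) (uniformSphere μ) (uniformSphere μ) := by
  have hneg : Measurable fun θ : sphere (0 : V) 1 => -θ := continuous_neg.measurable
  refine MeasurePreserving.smul_measure ⟨hneg, Measure.ext fun s hs => ?_⟩ _
  rw [Measure.map_apply hneg hs, μ.toSphere_apply' (hneg hs), μ.toSphere_apply' hs,
    ← Measure.measure_preimage_neg μ (Set.Ioo (0 : ℝ) 1 • Subtype.val '' s)]
  congr 2
  ext x
  constructor
  · rintro ⟨r, hr, _, ⟨θ, hθ, rfl⟩, rfl⟩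
    exact ⟨r, hr, _, ⟨-θ, hθ, rfl⟩, by simp⟩
  · rintro ⟨r, hr, _, ⟨θ, hθ, rfl⟩, h⟩
    exact ⟨r, hr, _, ⟨-θ, by simpa using hθ, rfl⟩, by simpa [neg_eq_iff_eq_neg] using h⟩

theorem integral_comp_neg_uniformSphere [μ.IsNegInvariant] (g : sphere (0 : V) 1 → ℝ) :
    ∫ θ, g (-θ) ∂uniformSphere μ = ∫ θ, g θ ∂uniformSphere μ :=
  (measurePreserving_neg_uniformSphere μ).integral_comp (Homeomorph.neg _).measurableEmbedding g

end UniformSphere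

section StarBody

variable {V : Type*} [NormedAddCommGroup V] [NormedSpace ℝ V]

/-- The open star body with radial function `k`, with the origin removed so that it is described by
polar coordinates. -/
def starBody (k : sphere (0 : V) 1 → ℝ) : Set V :=
  {x | ∃ θ : sphere (0 : V) 1, ∃ r : ℝ, 0 < r ∧ r < k θ ∧ x = r • (θ : V)}

theorem starBody_eq_image (k : sphere (0 : V) 1 → ℝ) :
    starBody k = Subtype.val '' (homeomorphUnitSphereProd V ⁻¹' {p | (p.2 : ℝ) < k p.1}) := by
  ext x
  constructor
  · rintro ⟨θ, r, hr, hrk, rfl⟩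
    refine ⟨(homeomorphUnitSphereProd V).symm (θ, ⟨r, hr⟩), ?_, by simp⟩
    rw [Set.mem_preimage, Homeomorph.apply_symm_apply]
    exact hrk
  · rintro ⟨y, hy, rfl⟩
    refine ⟨(homeomorphUnitSphereProd V y).1, (homeomorphUnitSphereProd V y).2,
      (homeomorphUnitSphereProd V y).2.2, hy, ?_⟩
    simp [smul_smul, mul_inv_cancel₀ (norm_ne_zero_iff.2 y.2)]

variable [MeasurableSpace V] [BorelSpace V] {k : sphere (0 : V) 1 → ℝ}

theorem measurableSet_starBody (hk : Measurable k) : MeasurableSet (starBody k) := by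
  rw [starBody_eq_image]
  exact (MeasurableEmbedding.subtype_coe (measurableSet_singleton _).compl).measurableSet_image.2
    ((homeomorphUnitSphereProd V).measurable (measurableSet_lt (by fun_prop) (by fun_prop)))

variable [FiniteDimensional ℝ V] [Nontrivial V] (μ : Measure V) [μ.IsAddHaarMeasure]

theorem measure_starBody (hk : Measurable k) (hk₀ : ∀ θ, 0 < k θ) :
    μ (starBody k) =
      μ (ball 0 1) * ∫⁻ θ, ENNReal.ofReal (k θ ^ Module.finrank ℝ V) ∂uniformSphere μ := by
  set d := Module.finrank ℝ V
  have hd : d ≠ 0 := Module.finrank_pos.ne'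
  have hd' : (d : ℝ≥0∞) ≠ 0 := by exact_mod_cast hd
  have hmeas : MeasurableSet {p : sphere (0 : V) 1 × Set.Ioi (0 : ℝ) | (p.2 : ℝ) < k p.1} :=
    measurableSet_lt (by fun_prop) (by fun_prop)
  have hfiber (θ : sphere (0 : V) 1) :
      Measure.volumeIoiPow (d - 1) (Prod.mk θ ⁻¹' {p | (p.2 : ℝ) < k p.1}) =
        (d : ℝ≥0∞)⁻¹ * ENNReal.ofReal (k θ ^ d) := by
    have hset : Prod.mk θ ⁻¹' {p : sphere (0 : V) 1 × Set.Ioi (0 : ℝ) | (p.2 : ℝ) < k p.1} =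
        Set.Iio ⟨k θ, hk₀ θ⟩ := rfl
    rw [hset, Measure.volumeIoiPow_apply_Iio, ← Nat.cast_add_one,
      Nat.sub_add_cancel (Nat.one_le_iff_ne_zero.2 hd), ENNReal.ofReal_div_of_pos (by positivity),
      ENNReal.ofReal_natCast, ENNReal.div_eq_inv_mul]
  rw [starBody_eq_image, ← comap_subtype_coe_apply (measurableSet_singleton _).compl,
    μ.measurePreserving_homeomorphUnitSphereProd.measure_preimage hmeas.nullMeasurableSet,
    Measure.prod_apply hmeas]
  rw [lintegral_congr hfiber, lintegral_const_mul _ (by fun_prop), uniformSphere,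
    lintegral_smul_measure, μ.toSphere_apply_univ, smul_eq_mul,
    ENNReal.mul_inv (.inl hd') (.inl (ENNReal.natCast_ne_top d)),
    mul_left_comm (μ (ball 0 1)), mul_assoc,
    ENNReal.inv_mul_cancel_left (measure_ball_pos _ _ one_pos).ne' measure_ball_lt_top.ne]

end StarBody

theorem integrable_of_continuous {Ω : Type*} [TopologicalSpace Ω] [CompactSpace Ω]
    [MeasurableSpace Ω] [OpensMeasurableSpace Ω] {μ : Measure Ω} [IsFiniteMeasureOnCompacts μ]
    {g : Ω → ℝ} (hg : Continuous g) : Integrable g μ :=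
  hg.integrable_of_hasCompactSupport (HasCompactSupport.of_compactSpace g)

section Urysohn

open Module (finrank finrank_pos)
open scoped Topology

theorem norm_smul_add_smul_le_one {V : Type*} [NormedAddCommGroup V] [InnerProductSpace ℝ V]
    {η θ : V} (hη : ‖η‖ = 1) (hθ : ‖θ‖ = 1) {r p h m : ℝ} (hr : 0 ≤ r) (hp : 0 ≤ p) (hpm : p ≤ m)
    (hm : m ≤ 1) (hh : 0 ≤ h) (hph : p * ⟪η, θ⟫ ≤ h) (hrh : r + h ≤ 1 - m ^ 2) :
    ‖r • η + p • θ‖ ≤ 1 := by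
  have hm₀ : 0 ≤ m := hp.trans hpm
  have hm₁ : m ^ 2 ≤ 1 := pow_le_one₀ hm₀ hm
  rw [← sq_le_one_iff₀ (norm_nonneg _)]
  calc ‖r • η + p • θ‖ ^ 2 = r ^ 2 + 2 * r * (p * ⟪η, θ⟫) + p ^ 2 := by
        rw [norm_add_sq_real, norm_smul, norm_smul, hη, hθ, real_inner_smul_left,
          real_inner_smul_right]
        simp only [Real.norm_eq_abs, mul_one, sq_abs]
        ring
    _ ≤ r ^ 2 + 2 * r * h + m ^ 2 := by gcongr
    _ ≤ (r + h) ^ 2 + m ^ 2 := by nlinarith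
    _ ≤ (1 - m ^ 2) ^ 2 + m ^ 2 := by gcongr
    _ ≤ 1 := by nlinarith [mul_nonneg (sq_nonneg m) (sub_nonneg.2 hm₁)]

section NormedSpace

variable {V : Type*} [NormedAddCommGroup V] [NormedSpace ℝ V] [MeasurableSpace V] [BorelSpace V]
  [FiniteDimensional ℝ V] [Nontrivial V] (μ : Measure V) [μ.IsAddHaarMeasure]

theorem measure_starBody_of_continuous {k : sphere (0 : V) 1 → ℝ} (hk : Continuous k)
    (hk₀ : ∀ θ, 0 < k θ) :
    μ (starBody k) = μ (ball 0 1) * ENNReal.ofReal (∫ θ, k θ ^ finrank ℝ V ∂uniformSphere μ) := by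
  rw [measure_starBody μ hk.measurable hk₀,
    ofReal_integral_eq_lintegral_ofReal (integrable_of_continuous (by fun_prop))
      (Eventually.of_forall fun θ => pow_nonneg (hk₀ θ).le _)]

theorem integral_pow_finrank_le_one {a k : sphere (0 : V) 1 → ℝ} (ha : Continuous a)
    (hk : Continuous k) (ha₀ : ∀ θ, 0 < a θ) (hk₀ : ∀ θ, 0 < k θ)
    (hk₁ : ∫ θ, k θ ^ finrank ℝ V ∂uniformSphere μ = 1) {s t : ℝ} (hs : 0 < s) (ht : 0 < t)
    (hst : s + t = 1) (h : ∀ x ∈ starBody a, ∀ y ∈ starBody k, ‖s • x + t • y‖ ≤ 1) :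
    ∫ θ, a θ ^ finrank ℝ V ∂uniformSphere μ ≤ 1 := by
  have hball₀ : μ (ball 0 1) ≠ 0 := (measure_ball_pos _ _ one_pos).ne'
  have hball₁ : μ (ball 0 1) ≠ ∞ := measure_ball_lt_top.ne
  have hBM : μ (starBody a) ^ s * μ (starBody k) ^ t ≤ μ (closedBall 0 1) :=
    (prekopaLeindler_of_isAddHaarMeasure μ).rpow_measure_mul_rpow_measure_le hs ht hst
      (measurableSet_starBody ha.measurable) (measurableSet_starBody hk.measurable)
      measurableSet_closedBall fun x hx y hy => by simpa using h x hx y hy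
  have hle : ENNReal.ofReal (∫ θ, a θ ^ finrank ℝ V ∂uniformSphere μ) ^ s ≤ 1 := by
    rw [measure_starBody_of_continuous μ ha ha₀, measure_starBody_of_continuous μ hk hk₀, hk₁,
      ENNReal.ofReal_one, mul_one, μ.addHaar_unitClosedBall_eq_addHaar_unitBall,
      ENNReal.mul_rpow_of_nonneg _ _ hs.le, mul_right_comm, ← ENNReal.rpow_add _ _ hball₀ hball₁,
      hst, ENNReal.rpow_one] at hBM
    exact (ENNReal.mul_le_mul_iff_right hball₀ hball₁).1 (by rwa [mul_one])
  by_contra! hlt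
  exact hle.not_gt (ENNReal.one_lt_rpow (by simpa using hlt) hs)

end NormedSpace

section InnerProductSpace

variable {V : Type*} [NormedAddCommGroup V] [InnerProductSpace ℝ V] {k H : sphere (0 : V) 1 → ℝ}

theorem radial_le_of_inner_mul_le (hkH : ∀ η θ : sphere (0 : V) 1, ⟪(η : V), (θ : V)⟫ * k θ ≤ H η)
    (θ : sphere (0 : V) 1) : k θ ≤ H θ := by
  simpa [real_inner_self_eq_norm_sq] using hkH θ θ

theorem norm_smul_add_smul_le_one_of_mem_starBody {a : sphere (0 : V) 1 → ℝ}
    (hkH : ∀ η θ : sphere (0 : V) 1, ⟪(η : V), (θ : V)⟫ * k θ ≤ H η) (hH₀ : ∀ θ, 0 ≤ H θ)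
    {M s t : ℝ} (hkM : ∀ θ, k θ ≤ M) (hs : 0 ≤ s) (ht : 0 ≤ t) (htM : t * M ≤ 1)
    (haH : ∀ θ, s * a θ + t * H θ ≤ 1 - (t * M) ^ 2) :
    ∀ x ∈ starBody a, ∀ y ∈ starBody k, ‖s • x + t • y‖ ≤ 1 := by
  rintro _ ⟨η, r, hr, hra, rfl⟩ _ ⟨θ, q, hq, hqk, rfl⟩
  have hqH : q * ⟪(η : V), (θ : V)⟫ ≤ H η := by
    rcases le_total 0 ⟪(η : V), (θ : V)⟫ with hηθ | hηθ
    · nlinarith [hkH η θ]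
    · nlinarith [hH₀ η]
  have hqM : q ≤ M := hqk.le.trans (hkM θ)
  rw [smul_smul, smul_smul]
  refine norm_smul_add_smul_le_one (by simp) (by simp) (h := t * H η) (m := t * M) (by positivity)
    (by positivity) (by gcongr) htM (mul_nonneg ht (hH₀ η)) ?_
    (le_trans (by gcongr) (haH η))
  rw [mul_assoc]
  gcongr

variable [MeasurableSpace V] [BorelSpace V] [FiniteDimensional ℝ V] [Nontrivial V]
  (μ : Measure V) [μ.IsAddHaarMeasure]

-- Brunn–Minkowski for the star body of `k` and the body of radial function
-- `a = (1 - t H - t² M²) / (1 - t)`, chosen so that the combination stays in the unit ball.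
theorem one_le_integral_add_mul (hk : Continuous k) (hH : Continuous H) (hk₀ : ∀ θ, 0 < k θ)
    (hk₁ : ∫ θ, k θ ^ finrank ℝ V ∂uniformSphere μ = 1)
    (hkH : ∀ η θ : sphere (0 : V) 1, ⟪(η : V), (θ : V)⟫ * k θ ≤ H η) {M t : ℝ}
    (hM : ∀ θ, H θ ≤ M) (ht : 0 < t) (ht₁ : t < 1) (htM : t * M ≤ 1 / 2) :
    1 ≤ ∫ θ, H θ ∂uniformSphere μ + t * M ^ 2 := by
  have hs : 0 < 1 - t := sub_pos.2 ht₁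
  have hH₀ (θ) : 0 < H θ := (hk₀ θ).trans_le (radial_le_of_inner_mul_le hkH θ)
  have htH (θ) : t * H θ ≤ t * M := by gcongr; exact hM θ
  have htH₀ (θ) : 0 < t * H θ := mul_pos ht (hH₀ θ)
  set a : sphere (0 : V) 1 → ℝ := fun θ => (1 - t * H θ - (t * M) ^ 2) / (1 - t) with ha_def
  have ha : Continuous a := by fun_prop
  have haH (θ) : (1 - t) * a θ = 1 - t * H θ - (t * M) ^ 2 := mul_div_cancel₀ _ hs.ne'
  have ha₀ (θ) : 0 < a θ := div_pos (by nlinarith [htH θ, htH₀ θ]) hs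
  have hcomb := norm_smul_add_smul_le_one_of_mem_starBody (a := a) hkH (fun θ => (hH₀ θ).le)
    (fun θ => (radial_le_of_inner_mul_le hkH θ).trans (hM θ)) hs.le ht.le (by linarith)
    fun θ => by linarith [haH θ]
  have hjensen : (∫ θ, a θ ∂uniformSphere μ) ^ finrank ℝ V ≤
      ∫ θ, a θ ^ finrank ℝ V ∂uniformSphere μ :=
    (convexOn_pow _).map_integral_le (by fun_prop) isClosed_Ici
      (Eventually.of_forall fun θ => (ha₀ θ).le) (integrable_of_continuous ha)
      (integrable_of_continuous (by fun_prop))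
  have hle : ∫ θ, a θ ∂uniformSphere μ ≤ 1 :=
    (pow_le_one_iff_of_nonneg (integral_nonneg fun θ => (ha₀ θ).le) finrank_pos.ne').1
      (hjensen.trans (integral_pow_finrank_le_one μ ha hk ha₀ hk₀ hk₁ hs ht (by ring) hcomb))
  have hint : ∫ θ, a θ ∂uniformSphere μ =
      (1 - t * ∫ θ, H θ ∂uniformSphere μ - (t * M) ^ 2) / (1 - t) := by
    rw [ha_def, integral_div, integral_sub (integrable_of_continuous (by fun_prop))
      (integrable_const _), integral_sub (integrable_const _)
      (integrable_of_continuous (by fun_prop)), integral_const_mul]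
    simp
  rw [hint, div_le_one hs] at hle
  nlinarith

theorem one_le_integral_of_integral_pow_finrank_eq_one (hk : Continuous k) (hH : Continuous H)
    (hk₀ : ∀ θ, 0 < k θ) (hk₁ : ∫ θ, k θ ^ finrank ℝ V ∂uniformSphere μ = 1)
    (hkH : ∀ η θ : sphere (0 : V) 1, ⟪(η : V), (θ : V)⟫ * k θ ≤ H η) :
    1 ≤ ∫ θ, H θ ∂uniformSphere μ := by
  obtain ⟨M, hM⟩ := (isCompact_range hH).bddAbove
  have hlim : Tendsto (fun t : ℝ => ∫ θ, H θ ∂uniformSphere μ + t * M ^ 2) (𝓝[>] 0)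
      (𝓝 (∫ θ, H θ ∂uniformSphere μ)) :=
    (Continuous.tendsto' (by fun_prop) _ _ (by simp)).mono_left nhdsWithin_le_nhds
  have htM : ∀ᶠ t in 𝓝[>] (0 : ℝ), t * M < 1 / 2 :=
    ((continuous_mul_const M).tendsto' 0 0 (by simp)).mono_left nhdsWithin_le_nhds
      |>.eventually_lt_const (by norm_num)
  refine ge_of_tendsto hlim ?_
  filter_upwards [htM, Ioo_mem_nhdsGT one_pos] with t htM ht
  exact one_le_integral_add_mul μ hk hH hk₀ hk₁ hkH (fun θ => hM ⟨θ, rfl⟩) ht.1 ht.2 htM.le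

/-- A form of Urysohn's inequality: the volume radius of a star body is at most the mean of any
continuous majorant of its support function. -/
theorem integral_pow_finrank_le_pow_integral (hk : Continuous k) (hH : Continuous H)
    (hk₀ : ∀ θ, 0 < k θ)
    (hkH : ∀ η θ : sphere (0 : V) 1, ⟪(η : V), (θ : V)⟫ * k θ ≤ H η) :
    ∫ θ, k θ ^ finrank ℝ V ∂uniformSphere μ ≤ (∫ θ, H θ ∂uniformSphere μ) ^ finrank ℝ V := by
  set I := ∫ θ, k θ ^ finrank ℝ V ∂uniformSphere μ with hI
  have hI₀ : 0 < I := by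
    rw [hI, integral_pos_iff_support_of_nonneg (fun θ => pow_nonneg (hk₀ θ).le _)
      (integrable_of_continuous (by fun_prop)),
      Function.support_eq_univ fun θ => (pow_pos (hk₀ θ) _).ne']
    simp
  obtain ⟨m, hm₀, hmI⟩ : ∃ m : ℝ, 0 < m ∧ m ^ finrank ℝ V = I :=
    ⟨I ^ ((finrank ℝ V : ℝ)⁻¹), Real.rpow_pos_of_pos hI₀ _,
      Real.rpow_inv_natCast_pow hI₀.le finrank_pos.ne'⟩
  have hle := one_le_integral_of_integral_pow_finrank_eq_one μ (k := fun θ => k θ / m)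
    (H := fun θ => H θ / m) (by fun_prop) (by fun_prop) (fun θ => div_pos (hk₀ θ) hm₀)
    (by simp_rw [div_pow]; rw [integral_div, hmI, div_self hI₀.ne'])
    fun η θ => by rw [← mul_div_assoc]; gcongr; exact hkH η θ
  rw [integral_div, one_le_div₀ hm₀] at hle
  rw [← hmI]
  gcongr

end InnerProductSpace

end Urysohn


section TaylorBound

theorem cos_le_exp_neg_sq_div_two {x : ℝ} (hx : 0 ≤ x) (hx' : x < Real.pi / 2) :
    Real.cos x ≤ Real.exp (-(x ^ 2) / 2) := by
  have hderiv (y : ℝ) : HasDerivAt (fun y => Real.cos y * Real.exp (y ^ 2 / 2))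
      (Real.exp (y ^ 2 / 2) * (y * Real.cos y - Real.sin y)) y :=
    ((Real.hasDerivAt_cos y).mul (((hasDerivAt_id y).pow 2).div_const 2).exp).congr_deriv
      (by simp; ring)
  have hanti :
      AntitoneOn (fun y => Real.cos y * Real.exp (y ^ 2 / 2)) (Set.Ico 0 (Real.pi / 2)) := by
    refine antitoneOn_of_deriv_nonpos (convex_Ico _ _)
      (fun y _ => (hderiv y).continuousAt.continuousWithinAt)
      (fun y _ => (hderiv y).differentiableAt.differentiableWithinAt) fun y hy => ?_
    rw [interior_Ico] at hy
    have hcos : 0 < Real.cos y := Real.cos_pos_of_mem_Ioo ⟨by linarith [hy.1], hy.2⟩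
    have htan := Real.le_tan hy.1.le hy.2
    rw [Real.tan_eq_sin_div_cos, le_div_iff₀ hcos] at htan
    rw [(hderiv y).deriv]
    exact mul_nonpos_of_nonneg_of_nonpos (Real.exp_pos _).le (sub_nonpos.2 htan)
  rw [neg_div, Real.exp_neg, ← one_div, le_div_iff₀ (Real.exp_pos _)]
  simpa using hanti ⟨le_rfl, by positivity⟩ ⟨hx, hx'⟩ hx

theorem le_taylor_of_second_deriv_le {φ φ' φ'' : ℝ → ℝ} {L : ℝ}
    (hφ : ∀ s, HasDerivAt φ (φ' s) s) (hφ' : ∀ s, HasDerivAt φ' (φ'' s) s) (hL : ∀ s, φ'' s ≤ L)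
    {s : ℝ} (hs : 0 ≤ s) : φ s ≤ φ 0 + s * φ' 0 + L * s ^ 2 / 2 := by
  have hderiv' (y : ℝ) : HasDerivAt (fun y => φ' y - y * L) (φ'' y - L) y :=
    (hφ' y).sub (hasDerivAt_mul_const L)
  have hanti' : Antitone fun y => φ' y - y * L :=
    antitone_of_deriv_nonpos (fun y => (hderiv' y).differentiableAt) fun y => by
      rw [(hderiv' y).deriv]
      exact sub_nonpos.2 (hL y)
  have hderiv (y : ℝ) : HasDerivAt (fun y => φ y - y * φ' 0 - L * (y ^ 2 / 2))
      (φ' y - φ' 0 - L * y) y :=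
    (((hφ y).sub (hasDerivAt_mul_const _)).sub
      ((((hasDerivAt_id y).pow 2).div_const 2).const_mul L)).congr_deriv (by simp)
  have hanti : AntitoneOn (fun y => φ y - y * φ' 0 - L * (y ^ 2 / 2)) (Set.Ici 0) := by
    refine antitoneOn_of_deriv_nonpos (convex_Ici _)
      (fun y _ => (hderiv y).continuousAt.continuousWithinAt)
      (fun y _ => (hderiv y).differentiableAt.differentiableWithinAt) fun y hy => ?_
    rw [interior_Ici] at hy
    rw [(hderiv y).deriv]
    linarith [hanti' (Set.mem_Ioi.1 hy).le]
  have hle := hanti Set.self_mem_Ici hs hs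
  norm_num at hle
  linarith

section GreatCircle

open scoped Real

variable {V : Type*} [NormedAddCommGroup V] [InnerProductSpace ℝ V] {η τ θ : V}

/-- The curve on the sphere starting at `η` in the direction `τ`: the unit speed great circle when
`η` and `τ` are orthonormal. -/
def greatCircle (η τ : V) (s : ℝ) : V := Real.cos s • η + Real.sin s • τ

@[simp]
theorem greatCircle_zero (η τ : V) : greatCircle η τ 0 = η := by simp [greatCircle]

@[simp]
theorem greatCircle_pi_div_two (η τ : V) : greatCircle η τ (π / 2) = τ := by simp [greatCircle]

@[simp]
theorem greatCircle_pi (η τ : V) : greatCircle η τ π = -η := by simp [greatCircle]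

theorem greatCircle_add_pi (η τ : V) (s : ℝ) : greatCircle η τ (s + π) = -greatCircle η τ s := by
  simp [greatCircle, add_comm]

theorem greatCircle_pi_sub (η τ : V) (s : ℝ) :
    greatCircle η (-τ) (π - s) = -greatCircle η τ s := by
  simp [greatCircle, add_comm]

theorem hasDerivAt_greatCircle (η τ : V) (s : ℝ) :
    HasDerivAt (greatCircle η τ) (greatCircle η τ (s + π / 2)) s := by
  rw [greatCircle, Real.cos_add_pi_div_two, Real.sin_add_pi_div_two]
  exact ((Real.hasDerivAt_cos s).smul_const η).add ((Real.hasDerivAt_sin s).smul_const τ)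

theorem inner_greatCircle (hη : ‖η‖ = 1) (hτ : ‖τ‖ = 1) (hητ : ⟪η, τ⟫ = 0) (s t : ℝ) :
    ⟪greatCircle η τ s, greatCircle η τ t⟫ = Real.cos (s - t) := by
  simp only [greatCircle, inner_add_left, inner_add_right, real_inner_smul_left,
    real_inner_smul_right, real_inner_self_eq_norm_sq, hη, hτ, hητ, real_inner_comm η τ,
    Real.cos_sub]
  ring

theorem norm_greatCircle (hη : ‖η‖ = 1) (hτ : ‖τ‖ = 1) (hητ : ⟪η, τ⟫ = 0) (s : ℝ) :
    ‖greatCircle η τ s‖ = 1 := by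
  rw [← sq_eq_sq₀ (norm_nonneg _) zero_le_one, ← real_inner_self_eq_norm_sq,
    inner_greatCircle hη hτ hητ, sub_self, Real.cos_zero, one_pow]

theorem exists_norm_eq_one_inner_eq_zero (hV : 1 < Module.finrank ℝ V) (η : V) :
    ∃ τ : V, ‖τ‖ = 1 ∧ ⟪η, τ⟫ = 0 := by
  have hspan : (ℝ ∙ η)ᗮ ≠ ⊥ := fun h => by
    have hle := finrank_span_le_card (R := ℝ) ({η} : Set V)
    rw [Submodule.orthogonal_eq_bot_iff.1 h, finrank_top, Set.toFinset_singleton,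
      Finset.card_singleton] at hle
    exact hle.not_gt hV
  obtain ⟨v, hv, hv₀⟩ := Submodule.exists_mem_ne_zero_of_ne_bot hspan
  exact ⟨‖v‖⁻¹ • v, by simp [norm_smul, hv₀], by
    rw [inner_smul_right, Submodule.mem_orthogonal_singleton_iff_inner_right.1 hv, mul_zero]⟩

theorem exists_eq_greatCircle_arccos_inner (hV : 1 < Module.finrank ℝ V) (hη : ‖η‖ = 1)
    (hθ : ‖θ‖ = 1) :
    ∃ τ : V, ‖τ‖ = 1 ∧ ⟪η, τ⟫ = 0 ∧ θ = greatCircle η τ (Real.arccos ⟪η, θ⟫) := by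
  have hc := abs_le.1 (abs_real_inner_le_norm η θ)
  rw [hη, hθ, mul_one] at hc
  set c := ⟪η, θ⟫ with hc_def
  have hv : ‖θ - c • η‖ = √(1 - c ^ 2) := by
    rw [← Real.sqrt_sq (norm_nonneg _), norm_sub_sq_real, inner_smul_right, norm_smul, hη, hθ,
      real_inner_comm, ← hc_def, Real.norm_eq_abs, mul_one, sq_abs]
    congr 1
    ring
  simp only [greatCircle, Real.cos_arccos hc.1 hc.2, Real.sin_arccos, ← hv]
  rcases eq_or_ne (θ - c • η) 0 with h₀ | h₀
  · obtain ⟨τ, hτ, hητ⟩ := exists_norm_eq_one_inner_eq_zero hV η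
    exact ⟨τ, hτ, hητ, by rw [h₀, norm_zero, zero_smul, add_zero, ← sub_eq_zero, h₀]⟩
  · refine ⟨‖θ - c • η‖⁻¹ • (θ - c • η), by simp [norm_smul, h₀], ?_, ?_⟩
    · simp [inner_smul_right, inner_sub_right, hη, hc_def]
    · rw [smul_inv_smul₀ (norm_ne_zero_iff.2 h₀), add_sub_cancel]

end GreatCircle

theorem inner_sgrad_of_inner_eq_zero (f : E n → ℝ) {η τ : E n} (hητ : ⟪η, τ⟫ = 0) :
    ⟪sgrad f η, τ⟫ = ⟪gradient f η, τ⟫ := by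
  rw [sgrad, inner_sub_left, real_inner_smul_left, hητ, mul_zero, sub_zero]

theorem inner_sgrad_self (f : E n → ℝ) {η : E n} (hη : ‖η‖ = 1) : ⟪η, sgrad f η⟫ = 0 := by
  rw [sgrad, inner_sub_right, real_inner_smul_right, real_inner_self_eq_norm_sq, hη,
    real_inner_comm, one_pow, mul_one, sub_self]

theorem inner_sHess_of_inner_eq_zero (f : E n → ℝ) {θ v : E n} (hθv : ⟪θ, v⟫ = 0) :
    ⟪sHess f θ v, v⟫ = ⟪hess f θ v, v⟫ - ⟪gradient f θ, θ⟫ * ‖v‖ ^ 2 := by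
  have hv : projPerp θ v = v := by simp [projPerp, hθv]
  have hw (w : E n) : ⟪projPerp θ w, v⟫ = ⟪w, v⟫ := by
    simp [projPerp, inner_sub_left, real_inner_smul_left, hθv]
  simp only [sHess, ContinuousLinearMap.comp_apply, hv, hw]
  simp [inner_sub_left, real_inner_smul_left]

theorem abs_inner_sHess_le (f : E n → ℝ) (θ : E n) {v : E n} (hv : ‖v‖ = 1) :
    |⟪sHess f θ v, v⟫| ≤ ‖sHess f θ‖ := by
  simpa [hv] using (abs_real_inner_le_norm (sHess f θ v) v).trans
    (mul_le_mul_of_nonneg_right ((sHess f θ).le_opNorm v) (norm_nonneg v))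

section ContDiffOn

variable {f : E n → ℝ} {U : Set (E n)}

theorem hasFDerivAt_gradient (hU : IsOpen U) (hf : ContDiffOn ℝ 2 f U) {x : E n} (hx : x ∈ U) :
    HasFDerivAt (gradient f) (hess f x) x := by
  have hd : DifferentiableAt ℝ (fderiv ℝ f) x :=
    ((hf.fderiv_of_isOpen (m := 1) hU (by norm_num)).contDiffAt (hU.mem_nhds hx)).differentiableAt
      one_ne_zero
  exact ((InnerProductSpace.toDual ℝ (E n)).symm.toContinuousLinearEquiv.differentiableAt.comp x
    hd).hasFDerivAt

theorem continuousOn_sgrad (hU : IsOpen U) (hf : ContDiffOn ℝ 2 f U) :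
    ContinuousOn (sgrad f) U := by
  have hgrad : ContinuousOn (gradient f) U := fun x hx =>
    (hasFDerivAt_gradient hU hf hx).continuousAt.continuousWithinAt
  unfold sgrad
  fun_prop

theorem hasDerivAt_comp_greatCircle (hU : IsOpen U) (hf : ContDiffOn ℝ 2 f U) {η τ : E n} {s : ℝ}
    (hs : greatCircle η τ s ∈ U) : HasDerivAt (fun s => f (greatCircle η τ s))
      ⟪gradient f (greatCircle η τ s), greatCircle η τ (s + Real.pi / 2)⟫ s := by
  have hd : DifferentiableAt ℝ f (greatCircle η τ s) :=
    (hf.contDiffAt (hU.mem_nhds hs)).differentiableAt two_ne_zero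
  rw [inner_gradient_left]
  exact hd.hasFDerivAt.comp_hasDerivAt s (hasDerivAt_greatCircle η τ s)

theorem hasDerivAt_inner_gradient_greatCircle (hU : IsOpen U) (hf : ContDiffOn ℝ 2 f U) {η τ : E n}
    (hη : ‖η‖ = 1) (hτ : ‖τ‖ = 1) (hητ : ⟪η, τ⟫ = 0) {s : ℝ} (hs : greatCircle η τ s ∈ U) :
    HasDerivAt (fun s => ⟪gradient f (greatCircle η τ s), greatCircle η τ (s + Real.pi / 2)⟫)
      ⟪sHess f (greatCircle η τ s) (greatCircle η τ (s + Real.pi / 2)),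
        greatCircle η τ (s + Real.pi / 2)⟫ s := by
  have hperp : ⟪greatCircle η τ s, greatCircle η τ (s + Real.pi / 2)⟫ = 0 := by
    simp [inner_greatCircle hη hτ hητ]
  have hvel : HasDerivAt (fun s => greatCircle η τ (s + Real.pi / 2)) (-greatCircle η τ s) s := by
    simpa [add_assoc, greatCircle_add_pi] using
      (hasDerivAt_greatCircle η τ (s + Real.pi / 2)).comp_add_const s (Real.pi / 2)
  refine (((hasFDerivAt_gradient hU hf hs).comp_hasDerivAt s
    (hasDerivAt_greatCircle η τ s)).inner ℝ hvel).congr_deriv ?_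
  rw [inner_sHess_of_inner_eq_zero f hperp, norm_greatCircle hη hτ hητ, inner_neg_right]
  simp only [Function.comp_apply]
  ring

end ContDiffOn

/-- The second-order Taylor estimate along great circles satisfied by a function whose spherical
Hessian has norm at most `L`. -/
def SphericalTaylorBound (L : ℝ) (f : E n → ℝ) : Prop :=
  ∀ ⦃η τ : E n⦄, ‖η‖ = 1 → ‖τ‖ = 1 → ⟪η, τ⟫ = 0 → ∀ ⦃s : ℝ⦄, 0 ≤ s →
    |f (greatCircle η τ s) - f η - s * ⟪sgrad f η, τ⟫| ≤ L * s ^ 2 / 2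

theorem sphericalTaylorBound_of_norm_sHess_le {f : E n → ℝ} {U : Set (E n)} {L : ℝ}
    (hU : IsOpen U) (hUS : sphere (0 : E n) 1 ⊆ U) (hf : ContDiffOn ℝ 2 f U)
    (hL : ∀ θ ∈ sphere (0 : E n) 1, ‖sHess f θ‖ ≤ L) : SphericalTaylorBound L f := by
  intro η τ hη hτ hητ s hs
  have hmem (s : ℝ) : greatCircle η τ s ∈ sphere (0 : E n) 1 :=
    mem_sphere_zero_iff_norm.2 (norm_greatCircle hη hτ hητ s)
  have hφ (s : ℝ) := hasDerivAt_comp_greatCircle hU hf (hUS (hmem s))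
  have hφ' (s : ℝ) := hasDerivAt_inner_gradient_greatCircle hU hf hη hτ hητ (hUS (hmem s))
  have hφ'' (s : ℝ) := abs_le.1 ((abs_inner_sHess_le f (greatCircle η τ s)
    (norm_greatCircle hη hτ hητ (s + Real.pi / 2))).trans (hL _ (hmem s)))
  have hupper := le_taylor_of_second_deriv_le hφ hφ' (fun s => (hφ'' s).2) hs
  have hlower := le_taylor_of_second_deriv_le (fun s => (hφ s).neg) (fun s => (hφ' s).neg)
    (fun s => neg_le.1 (hφ'' s).1) hs
  simp only [Pi.neg_apply, greatCircle_zero, zero_add, greatCircle_pi_div_two] at hupper hlower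
  rw [inner_sgrad_of_inner_eq_zero f hητ, abs_le]
  constructor <;> linarith

end TaylorBound

namespace SphericalTaylorBound

variable {f : E n → ℝ} {L : ℝ} {η θ τ : E n}

theorem nonneg (hf : SphericalTaylorBound L f) (hη : ‖η‖ = 1) (hτ : ‖τ‖ = 1)
    (hητ : ⟪η, τ⟫ = 0) : 0 ≤ L := by
  linarith [(abs_nonneg _).trans (hf hη hτ hητ zero_le_one)]

theorem inner_sgrad_le (hf : SphericalTaylorBound L f) (hη : ‖η‖ = 1) (hτ : ‖τ‖ = 1)
    (hητ : ⟪η, τ⟫ = 0) : ⟪sgrad f η, τ⟫ ≤ L * Real.pi / 2 := by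
  -- The half great circles from `η` along `τ` and along `-τ` both end at `-η`.
  have hpos := (abs_le.1 (hf hη hτ hητ Real.pi_pos.le)).1
  have hneg := (abs_le.1 (hf hη (τ := -τ) (by rwa [norm_neg])
    (by rw [inner_neg_right, hητ, neg_zero]) Real.pi_pos.le)).2
  rw [greatCircle_pi] at hpos hneg
  rw [inner_neg_right] at hneg
  refine le_of_mul_le_mul_left ?_ Real.pi_pos
  linarith

theorem norm_sgrad_le (hf : SphericalTaylorBound L f) (hL : 0 ≤ L) (hη : ‖η‖ = 1) :
    ‖sgrad f η‖ ≤ L * Real.pi / 2 := by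
  rcases eq_or_ne (sgrad f η) 0 with h₀ | h₀
  · rw [h₀, norm_zero]
    positivity
  · have hle := hf.inner_sgrad_le hη (τ := ‖sgrad f η‖⁻¹ • sgrad f η) (by simp [norm_smul, h₀])
      (by rw [inner_smul_right, inner_sgrad_self f hη, mul_zero])
    rwa [inner_smul_right, real_inner_self_eq_norm_mul_norm,
      inv_mul_cancel_left₀ (norm_ne_zero_iff.2 h₀)] at hle

theorem inner_sgrad_nonpos_of_forall_le (hf : SphericalTaylorBound L f) (hη : ‖η‖ = 1)
    (hτ : ‖τ‖ = 1) (hητ : ⟪η, τ⟫ = 0) (hmax : ∀ θ : E n, ‖θ‖ = 1 → f θ ≤ f η) :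
    ⟪sgrad f η, τ⟫ ≤ 0 := by
  by_contra! hpos
  have hL : 0 < L + 1 := by linarith [hf.nonneg hη hτ hητ]
  obtain ⟨s, hs⟩ : ∃ s, ⟪sgrad f η, τ⟫ = (L + 1) * s :=
    ⟨⟪sgrad f η, τ⟫ / (L + 1), (mul_div_cancel₀ _ hL.ne').symm⟩
  rw [hs, mul_pos_iff_of_pos_left hL] at hpos
  have htaylor := (abs_le.1 (hf hη hτ hητ hpos.le)).1
  have hle := hmax _ (norm_greatCircle hη hτ hητ s)
  rw [hs] at htaylor
  nlinarith [mul_pos hL (pow_pos hpos 2), pow_pos hpos 2]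

theorem inner_sgrad_eq_zero_of_forall_le (hf : SphericalTaylorBound L f) (hη : ‖η‖ = 1)
    (hτ : ‖τ‖ = 1) (hητ : ⟪η, τ⟫ = 0) (hmax : ∀ θ : E n, ‖θ‖ = 1 → f θ ≤ f η) :
    ⟪sgrad f η, τ⟫ = 0 := by
  refine le_antisymm (hf.inner_sgrad_nonpos_of_forall_le hη hτ hητ hmax) ?_
  have hneg := hf.inner_sgrad_nonpos_of_forall_le hη (τ := -τ) (by rwa [norm_neg])
    (by rw [inner_neg_right, hητ, neg_zero]) hmax
  rwa [inner_neg_right, neg_nonpos] at hneg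

theorem two_mul_sub_le_add_neg (hf : SphericalTaylorBound L f) (hn : 2 ≤ n) (hη : ‖η‖ = 1)
    (hθ : ‖θ‖ = 1) (hmax : ∀ θ : E n, ‖θ‖ = 1 → f θ ≤ f η) :
    2 * f η - L * Real.pi ^ 2 / 2 ≤ f θ + f (-θ) := by
  obtain ⟨τ, hτ, hητ, hθτ⟩ :=
    exists_eq_greatCircle_arccos_inner (by rwa [finrank_euclideanSpace_fin]) hη hθ
  set α := Real.arccos ⟪η, θ⟫
  have hα₀ : 0 ≤ α := Real.arccos_nonneg _
  have hα₁ : 0 ≤ Real.pi - α := sub_nonneg.2 (Real.arccos_le_pi _)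
  have hcrit : ⟪sgrad f η, τ⟫ = 0 := hf.inner_sgrad_eq_zero_of_forall_le hη hτ hητ hmax
  have hle := (abs_le.1 (hf hη hτ hητ hα₀)).1
  have hle_neg := (abs_le.1 (hf hη (τ := -τ) (by rwa [norm_neg])
    (by rw [inner_neg_right, hητ, neg_zero]) hα₁)).1
  rw [← hθτ, hcrit] at hle
  rw [greatCircle_pi_sub, ← hθτ, inner_neg_right, hcrit] at hle_neg
  nlinarith [mul_nonneg (hf.nonneg hη hτ hητ) (mul_nonneg hα₀ hα₁)]

theorem le_of_integral_eq_zero (hf : SphericalTaylorBound L f) (hn : 2 ≤ n)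
    (hcont : Continuous fun θ : sphere (0 : E n) 1 => f θ)
    (hmean : ∫ θ : sphere (0 : E n) 1, f θ ∂uniformSphere volume = 0)
    (hθ : ‖θ‖ = 1) : f θ ≤ L * Real.pi ^ 2 / 4 := by
  have : Nontrivial (E n) := ⟨θ, 0, norm_ne_zero_iff.1 (by simp [hθ])⟩
  obtain ⟨η, -, hη⟩ := isCompact_univ.exists_isMaxOn ⟨⟨θ, by simpa⟩, Set.mem_univ _⟩
    hcont.continuousOn
  have hmax (ξ : E n) (hξ : ‖ξ‖ = 1) : f ξ ≤ f η :=
    hη (Set.mem_univ (⟨ξ, by simpa using hξ⟩ : sphere (0 : E n) 1))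
  have hint : Integrable (fun ξ : sphere (0 : E n) 1 => f ξ) (uniformSphere volume) :=
    integrable_of_continuous hcont
  have hint_neg : Integrable (fun ξ : sphere (0 : E n) 1 => f (-ξ)) (uniformSphere volume) :=
    integrable_of_continuous (hcont.comp continuous_neg)
  have hle : ∫ _ : sphere (0 : E n) 1, (2 * f η - L * Real.pi ^ 2 / 2) ∂uniformSphere volume ≤
      ∫ ξ : sphere (0 : E n) 1, (f ξ + f (-ξ)) ∂uniformSphere volume :=
    integral_mono (integrable_const _) (hint.add hint_neg) fun ξ =>
      hf.two_mul_sub_le_add_neg hn (by simp) (by simp) hmax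
  have hneg := integral_comp_neg_uniformSphere volume fun ξ : sphere (0 : E n) 1 => f ξ
  simp only [coe_neg_sphere] at hneg
  rw [integral_add hint hint_neg, hneg, hmean, integral_const, probReal_univ, one_smul] at hle
  linarith [hmax θ hθ]

theorem inner_mul_exp_le (hf : SphericalTaylorBound L f) (hn : 2 ≤ n) {s : ℝ} (hs : 0 ≤ s)
    (hsL : s * L < 1) (hη : ‖η‖ = 1) (hθ : ‖θ‖ = 1) : ⟪η, θ⟫ * Real.exp (s * f θ) ≤
      Real.exp (s * f η + s ^ 2 / (2 * (1 - s * L)) * ‖sgrad f η‖ ^ 2) := by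
  rcases le_or_gt ⟪η, θ⟫ 0 with hηθ | hηθ
  · exact (mul_nonpos_of_nonpos_of_nonneg hηθ (Real.exp_pos _).le).trans (Real.exp_pos _).le
  obtain ⟨τ, hτ, hητ, hθτ⟩ :=
    exists_eq_greatCircle_arccos_inner (by rwa [finrank_euclideanSpace_fin]) hη hθ
  have hinner := abs_le.1 (abs_real_inner_le_norm η θ)
  rw [hη, hθ, mul_one] at hinner
  have hcos : Real.cos (Real.arccos ⟪η, θ⟫) = ⟪η, θ⟫ := Real.cos_arccos hinner.1 hinner.2
  have hα₀ : 0 ≤ Real.arccos ⟪η, θ⟫ := Real.arccos_nonneg _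
  have hα₁ : Real.arccos ⟪η, θ⟫ < Real.pi / 2 := Real.arccos_lt_pi_div_two.2 hηθ
  set α := Real.arccos ⟪η, θ⟫
  set p := ‖sgrad f η‖
  have hp : ⟪sgrad f η, τ⟫ ≤ p := by simpa [hτ] using real_inner_le_norm (sgrad f η) τ
  have htaylor : f θ ≤ f η + α * p + L * α ^ 2 / 2 := by
    have hle := (abs_le.1 (hf hη hτ hητ hα₀)).2
    rw [← hθτ] at hle
    linarith [mul_le_mul_of_nonneg_left hp hα₀]
  have hsquare : s * α * p - (1 - s * L) * α ^ 2 / 2 ≤ s ^ 2 / (2 * (1 - s * L)) * p ^ 2 := by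
    have hpos : 0 < 2 * (1 - s * L) := by linarith
    rw [div_mul_eq_mul_div, le_div_iff₀ hpos]
    nlinarith [sq_nonneg (s * p - (1 - s * L) * α)]
  calc ⟪η, θ⟫ * Real.exp (s * f θ) ≤ Real.exp (-(α ^ 2) / 2) * Real.exp (s * f θ) := by
        gcongr
        exact hcos ▸ cos_le_exp_neg_sq_div_two hα₀ hα₁
    _ = Real.exp (-(α ^ 2) / 2 + s * f θ) := (Real.exp_add _ _).symm
    _ ≤ Real.exp (s * f η + s ^ 2 / (2 * (1 - s * L)) * p ^ 2) :=
        Real.exp_le_exp.2 (by linarith [mul_le_mul_of_nonneg_left htaylor hs])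

theorem integral_exp_le_integral_exp_pow (hf : SphericalTaylorBound L f) (hn : 2 ≤ n)
    (hcont : Continuous fun θ : sphere (0 : E n) 1 => f θ)
    (hgrad : Continuous fun θ : sphere (0 : E n) 1 => sgrad f θ) {s : ℝ} (hs : 0 ≤ s)
    (hsL : s * L < 1) :
    ∫ θ : sphere (0 : E n) 1, Real.exp (n * s * f θ) ∂uniformSphere volume ≤
      (∫ θ : sphere (0 : E n) 1, Real.exp (s * f θ + s ^ 2 / (2 * (1 - s * L)) * ‖sgrad f θ‖ ^ 2)
        ∂uniformSphere volume) ^ n := by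
  have : Nontrivial (E n) := Module.nontrivial_of_finrank_pos (R := ℝ)
    (by rw [finrank_euclideanSpace_fin]; exact two_pos.trans_le hn)
  have hle := integral_pow_finrank_le_pow_integral volume
    (k := fun θ : sphere (0 : E n) 1 => Real.exp (s * f θ))
    (H := fun θ => Real.exp (s * f θ + s ^ 2 / (2 * (1 - s * L)) * ‖sgrad f θ‖ ^ 2))
    (hcont.const_mul s).rexp ((hcont.const_mul s).add ((hgrad.norm.pow 2).const_mul _)).rexp
    (fun θ => Real.exp_pos _)
    (fun η θ => hf.inner_mul_exp_le hn hs hsL (by simp) (by simp))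
  simpa only [finrank_euclideanSpace_fin, ← Real.exp_nat_mul, ← mul_assoc] using hle

end SphericalTaylorBound

section Linearization

open scoped Topology

theorem tendsto_exp_sub_one_sub_self_div_sq {u : ℝ → ℝ} {x : ℝ}
    (hu : Tendsto (fun s => u s / s) (𝓝[>] 0) (𝓝 x)) :
    Tendsto (fun s => (Real.exp (u s) - 1 - u s) / s ^ 2) (𝓝[>] 0) (𝓝 (x ^ 2 / 2)) := by
  have hu₀ : Tendsto u (𝓝[>] 0) (𝓝 0) := by
    have hlim := (tendsto_id.mono_left nhdsWithin_le_nhds).mul hu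
    rw [zero_mul] at hlim
    refine hlim.congr' (eventually_mem_nhdsWithin.mono fun s hs => mul_div_cancel₀ _ (ne_of_gt hs))
  have hbound : Tendsto (fun s => |u s| * (u s / s) ^ 2) (𝓝[>] 0) (𝓝 0) := by
    simpa using hu₀.abs.mul (hu.pow 2)
  have hsmall : ∀ᶠ s in 𝓝[>] 0, |u s| < 1 := hu₀.abs.eventually_lt_const (by simp)
  have hcubic : Tendsto (fun s => (Real.exp (u s) - (1 + u s + u s ^ 2 / 2)) / s ^ 2) (𝓝[>] 0)
      (𝓝 0) := by
    refine squeeze_zero_norm' (hsmall.mono fun s hs => ?_) hbound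
    have hexp := Real.exp_bound hs.le (n := 3) (by norm_num)
    norm_num [Finset.sum_range_succ, Nat.factorial] at hexp
    have hle : |Real.exp (u s) - (1 + u s + u s ^ 2 / 2)| ≤ |u s| * u s ^ 2 := by
      rw [← sq_abs (u s), ← pow_succ', sq_abs]
      linarith [pow_nonneg (abs_nonneg (u s)) 3]
    rw [Real.norm_eq_abs, abs_div, abs_of_nonneg (sq_nonneg s), div_pow, ← mul_div_assoc]
    gcongr
  have hlim := hcubic.add ((hu.pow 2).div_const 2)
  rw [zero_add] at hlim
  refine hlim.congr fun s => ?_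
  rw [div_pow, div_right_comm, ← add_div]
  ring

theorem tendsto_exp_add_sub_one_sub_div_sq {b : ℝ → ℝ} {β : ℝ}
    (hb : Tendsto (fun s => b s / s ^ 2) (𝓝[>] 0) (𝓝 β)) (x y : ℝ) :
    Tendsto (fun s => (Real.exp (s * x + b s * y) - 1 - s * x) / s ^ 2) (𝓝[>] 0)
      (𝓝 (x ^ 2 / 2 + β * y)) := by
  have hslope : Tendsto (fun s => (s * x + b s * y) / s) (𝓝[>] 0) (𝓝 x) := by
    have hlim := ((tendsto_id.mono_left nhdsWithin_le_nhds).mul (hb.mul_const y)).const_add x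
    rw [zero_mul, add_zero] at hlim
    refine hlim.congr' (eventually_mem_nhdsWithin.mono fun s hs => ?_)
    have hs₀ : s ≠ 0 := ne_of_gt hs
    simp only [id_eq]
    field_simp
  refine ((tendsto_exp_sub_one_sub_self_div_sq hslope).add (hb.mul_const y)).congr fun s => ?_
  ring

theorem abs_exp_sub_one_sub_div_sq_le {s b x y C K : ℝ} (hs : 0 < s) (hs₁ : s ≤ 1)
    (hb : |b| ≤ C * s ^ 2) (hx : |x| ≤ K) (hy : |y| ≤ K) (hsK : s * ((1 + C) * K) ≤ 1) :
    |(Real.exp (s * x + b * y) - 1 - s * x) / s ^ 2| ≤ ((1 + C) * K) ^ 2 + C * K := by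
  have hC : 0 ≤ C := nonneg_of_mul_nonneg_left ((abs_nonneg b).trans hb) (pow_pos hs 2)
  have hby : |b * y| ≤ s ^ 2 * (C * K) := by
    rw [abs_mul]
    calc |b| * |y| ≤ C * s ^ 2 * K := by gcongr
      _ = s ^ 2 * (C * K) := by ring
  have hu : |s * x + b * y| ≤ s * ((1 + C) * K) := by
    have hK : 0 ≤ C * K := mul_nonneg hC ((abs_nonneg x).trans hx)
    have hsx : |s * x| ≤ s * K := by
      rw [abs_mul, abs_of_pos hs]
      gcongr
    nlinarith [abs_add_le (s * x) (b * y), mul_nonneg hs.le (sub_nonneg.2 hs₁)]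
  have hexp := Real.abs_exp_sub_one_sub_id_le (hu.trans hsK)
  rw [abs_div, abs_of_pos (pow_pos hs 2), div_le_iff₀ (pow_pos hs 2)]
  calc |Real.exp (s * x + b * y) - 1 - s * x|
      = |(Real.exp (s * x + b * y) - 1 - (s * x + b * y)) + b * y| := by congr 1; ring
    _ ≤ (s * x + b * y) ^ 2 + s ^ 2 * (C * K) := (abs_add_le _ _).trans (add_le_add hexp hby)
    _ ≤ (s * ((1 + C) * K)) ^ 2 + s ^ 2 * (C * K) :=
        add_le_add_left (sq_le_sq.2 (hu.trans (le_abs_self _))) _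
    _ = (((1 + C) * K) ^ 2 + C * K) * s ^ 2 := by ring

theorem tendsto_pow_sub_one_div_sq {I : ℝ → ℝ} {l : ℝ}
    (hI : Tendsto (fun s => (I s - 1) / s ^ 2) (𝓝[>] 0) (𝓝 l)) (n : ℕ) :
    Tendsto (fun s => (I s ^ n - 1) / s ^ 2) (𝓝[>] 0) (𝓝 (n * l)) := by
  have hne : ∀ᶠ s : ℝ in 𝓝[>] 0, s ≠ 0 := eventually_mem_nhdsWithin.mono fun s hs => ne_of_gt hs
  have hsq : Tendsto (fun s : ℝ => s ^ 2) (𝓝[>] 0) (𝓝 0) :=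
    ((continuous_pow 2).tendsto' 0 0 (by simp)).mono_left nhdsWithin_le_nhds
  have hI₁ : Tendsto I (𝓝[>] 0) (𝓝 1) := by
    have hlim := (hI.mul hsq).add_const 1
    rw [mul_zero, zero_add] at hlim
    exact hlim.congr' (hne.mono fun s hs => by field_simp; ring)
  have hsum : Tendsto (fun s => ∑ i ∈ Finset.range n, I s ^ i) (𝓝[>] 0) (𝓝 n) := by
    simpa using tendsto_finsetSum (Finset.range n) fun i _ => hI₁.pow i
  refine (hsum.mul hI).congr fun s => ?_
  rw [← mul_div_assoc, geom_sum_mul]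

variable {Ω : Type*} [TopologicalSpace Ω] [CompactSpace Ω] [MeasurableSpace Ω]
  [OpensMeasurableSpace Ω] {μ : Measure Ω} [IsProbabilityMeasure μ] {f g : Ω → ℝ}

theorem tendsto_integral_exp_sub_one_div_sq (hf : Continuous f) (hg : Continuous g)
    (hmean : ∫ ω, f ω ∂μ = 0) {b : ℝ → ℝ} {β : ℝ}
    (hb : Tendsto (fun s => b s / s ^ 2) (𝓝[>] 0) (𝓝 β)) :
    Tendsto (fun s => (∫ ω, Real.exp (s * f ω + b s * g ω) ∂μ - 1) / s ^ 2) (𝓝[>] 0)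
      (𝓝 ((∫ ω, f ω ^ 2 ∂μ) / 2 + β * ∫ ω, g ω ∂μ)) := by
  obtain ⟨K₁, hK₁⟩ := (isCompact_range hf.abs).bddAbove
  obtain ⟨K₂, hK₂⟩ := (isCompact_range hg.abs).bddAbove
  have hsmall : ∀ᶠ s in 𝓝[>] (0 : ℝ), s * ((1 + (|β| + 1)) * max K₁ K₂) < 1 :=
    ((continuous_mul_const _).tendsto' 0 0 (by simp)).mono_left nhdsWithin_le_nhds
      |>.eventually_lt_const one_pos
  have hquot : ∀ᶠ s in 𝓝[>] 0, |b s / s ^ 2| < |β| + 1 := hb.abs.eventually_lt_const (by simp)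
  have hlim : Tendsto (fun s => ∫ ω, (Real.exp (s * f ω + b s * g ω) - 1 - s * f ω) / s ^ 2 ∂μ)
      (𝓝[>] 0) (𝓝 (∫ ω, (f ω ^ 2 / 2 + β * g ω) ∂μ)) := by
    refine tendsto_integral_filter_of_dominated_convergence
      (fun _ => ((1 + (|β| + 1)) * max K₁ K₂) ^ 2 + (|β| + 1) * max K₁ K₂)
      (Eventually.of_forall fun s => (integrable_of_continuous (by fun_prop)).aestronglyMeasurable)
      ?_ (integrable_const _)
      (Eventually.of_forall fun ω => tendsto_exp_add_sub_one_sub_div_sq hb _ _)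
    filter_upwards [hsmall, hquot, Ioo_mem_nhdsGT one_pos] with s hsK hbs hs
    refine Eventually.of_forall fun ω => abs_exp_sub_one_sub_div_sq_le hs.1 hs.2.le ?_
      ((hK₁ ⟨ω, rfl⟩).trans (le_max_left _ _)) ((hK₂ ⟨ω, rfl⟩).trans (le_max_right _ _)) hsK.le
    rw [abs_div, abs_of_pos (pow_pos hs.1 2), div_lt_iff₀ (pow_pos hs.1 2)] at hbs
    exact hbs.le
  rw [integral_add (integrable_of_continuous (by fun_prop))
    (integrable_of_continuous (by fun_prop)), integral_div, integral_const_mul] at hlim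
  refine hlim.congr fun s => ?_
  rw [integral_div, integral_sub (integrable_of_continuous (by fun_prop))
    (integrable_of_continuous (by fun_prop)), integral_sub (integrable_of_continuous (by fun_prop))
    (integrable_const _), integral_const_mul, hmean]
  simp

-- Both sides of `h` are `1 + O(s²)` as `s → 0`; compare the coefficients of `s²`.
theorem sub_one_mul_integral_sq_le_of_integral_exp_le_pow {n : ℕ} (hn : n ≠ 0) (hf : Continuous f)
    (hg : Continuous g) (hmean : ∫ ω, f ω ∂μ = 0)
    (h : ∀ ⦃s : ℝ⦄, 0 ≤ s → s < 1 → ∫ ω, Real.exp (n * s * f ω) ∂μ ≤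
      (∫ ω, Real.exp (s * f ω + s ^ 2 / (2 * (1 - s)) * g ω) ∂μ) ^ n) :
    ((n : ℝ) - 1) * ∫ ω, f ω ^ 2 ∂μ ≤ ∫ ω, g ω ∂μ := by
  have hb : Tendsto (fun s : ℝ => s ^ 2 / (2 * (1 - s)) / s ^ 2) (𝓝[>] 0) (𝓝 (1 / 2)) := by
    have hlim : Tendsto (fun s : ℝ => 1 / (2 * (1 - s))) (𝓝 0) (𝓝 (1 / (2 * (1 - 0)))) :=
      ContinuousAt.tendsto (by fun_prop (disch := norm_num))
    rw [sub_zero, mul_one] at hlim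
    refine (hlim.mono_left nhdsWithin_le_nhds).congr' ?_
    filter_upwards [self_mem_nhdsWithin] with s hs
    rw [div_div_cancel_left' (pow_pos hs 2).ne', one_div]
  have hleft := tendsto_integral_exp_sub_one_div_sq (μ := μ) (f := fun ω => n * f ω)
    (by fun_prop) hg (by rw [integral_const_mul, hmean, mul_zero]) (b := 0) (β := 0) (by simp)
  have hright := tendsto_pow_sub_one_div_sq (tendsto_integral_exp_sub_one_div_sq hf hg hmean hb) n
  have hle := le_of_tendsto_of_tendsto hleft hright ?_
  · simp only [mul_pow, integral_const_mul] at hle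
    have hn₀ : (0 : ℝ) < n := by positivity
    refine le_of_mul_le_mul_left ?_ hn₀
    linarith
  · filter_upwards [Ioo_mem_nhdsGT one_pos] with s hs
    gcongr
    simpa [mul_assoc, mul_left_comm s] using h hs.1.le hs.2

end Linearization

section ExponentialBound

theorem exp_le_one_add_add_mul_sq {x : ℝ} (hx : x ≤ 2) :
    Real.exp x ≤ 1 + x + 11 / 10 * x ^ 2 := by
  rcases le_total x 0 with hx₀ | hx₀
  · have hpos : 0 < 1 + -x + (-x) ^ 2 / 2 := by nlinarith [sq_nonneg x]
    have hinv : Real.exp x ≤ 1 / (1 + -x + (-x) ^ 2 / 2) := by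
      rw [← neg_neg x, Real.exp_neg, ← one_div, neg_neg]
      gcongr
      exact Real.quadratic_le_exp_of_nonneg (neg_nonneg.2 hx₀)
    have hprod : 1 ≤ (1 + x + x ^ 2 / 2) * (1 + -x + (-x) ^ 2 / 2) := by
      nlinarith [sq_nonneg (x ^ 2)]
    linarith [(div_le_iff₀ hpos).2 hprod, sq_nonneg x]
  · obtain ⟨y, rfl⟩ : ∃ y, x = 2 * y := ⟨x / 2, by ring⟩
    have hy₀ : 0 ≤ y := by linarith
    have hy₁ : y ≤ 1 := by linarith
    have hcube : y ^ 3 ≤ y ^ 2 := pow_le_pow_of_le_one hy₀ hy₁ (by norm_num)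
    have hfourth : y ^ 4 ≤ y ^ 2 := pow_le_pow_of_le_one hy₀ hy₁ (by norm_num)
    have hexp := Real.exp_bound' hy₀ hy₁ (n := 4) (by norm_num)
    norm_num [Finset.sum_range_succ, Nat.factorial] at hexp
    calc Real.exp (2 * y) = Real.exp y ^ 2 := Real.exp_nat_mul y 2
      _ ≤ (1 + y + 23 / 32 * y ^ 2) ^ 2 := by
        gcongr
        linarith
      _ ≤ 1 + 2 * y + 11 / 10 * (2 * y) ^ 2 := by nlinarith

theorem add_sq_le_one_add_div_mul_sq {ε : ℝ} (hε : 0 < ε) (x y : ℝ) :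
    (x + y) ^ 2 ≤ (1 + ε) * x ^ 2 + (1 + 1 / ε) * y ^ 2 := by
  have hsq : 0 ≤ (ε * x - y) ^ 2 / ε := by positivity
  have hexpand : (ε * x - y) ^ 2 / ε = ε * x ^ 2 - 2 * x * y + 1 / ε * y ^ 2 := by
    field_simp
    ring
  linarith

theorem exp_mul_add_le {x y c q ε : ℝ} (hx : x ≤ 5 / 2) (hy₀ : 0 ≤ y) (hy : y ≤ 5 / 2)
    (hc₀ : 0 ≤ c) (hc : c ≤ 1 / 2) (hq₀ : 0 ≤ q) (hq : q ≤ 1 / 2) (hε : 0 < ε) :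
    Real.exp (c * x + c * q * y) ≤ 1 + c * x + 11 / 10 * (1 + ε) * c ^ 2 * x ^ 2 +
      (c * q + 11 / 10 * (1 + 1 / ε) * (c * q) ^ 2 * (5 / 2)) * y := by
  have hcx : c * x ≤ 1 / 2 * (5 / 2) := (mul_le_mul_of_nonneg_left hx hc₀).trans (by gcongr)
  have hcqy : c * q * y ≤ 1 / 2 * (1 / 2) * (5 / 2) := by gcongr
  have hyy : y ^ 2 ≤ 5 / 2 * y := by nlinarith
  calc Real.exp (c * x + c * q * y)
      ≤ 1 + (c * x + c * q * y) + 11 / 10 * (c * x + c * q * y) ^ 2 :=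
        exp_le_one_add_add_mul_sq (by linarith)
    _ ≤ 1 + (c * x + c * q * y) +
          11 / 10 * ((1 + ε) * (c * x) ^ 2 + (1 + 1 / ε) * ((c * q) ^ 2 * y ^ 2)) := by
        gcongr
        simpa only [mul_pow] using add_sq_le_one_add_div_mul_sq hε (c * x) (c * q * y)
    _ ≤ 1 + (c * x + c * q * y) +
          11 / 10 * ((1 + ε) * (c * x) ^ 2 + (1 + 1 / ε) * ((c * q) ^ 2 * (5 / 2 * y))) := by
        gcongr
    _ = 1 + c * x + 11 / 10 * (1 + ε) * c ^ 2 * x ^ 2 +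
          (c * q + 11 / 10 * (1 + 1 / ε) * (c * q) ^ 2 * (5 / 2)) * y := by ring

-- With `n = r + 1` and `s = c = (n - 1) / (2 n)`, the weight `s² / (2 (1 - s))` is `c q`. The
-- coefficients are those of `exp_mul_add_le` at `ε = r / 4`.
theorem sum_coefficients_le {r c q : ℝ} (hr : 0 < r) (hc : c = r / (2 * (r + 1)))
    (hq : q = r / (2 * (r + 2))) :
    11 / 10 * (1 + r / 4) * c ^ 2 / r +
      (c * q + 11 / 10 * (1 + 1 / (r / 4)) * (c * q) ^ 2 * (5 / 2)) ≤ c := by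
  have hgap : c - (11 / 10 * (1 + r / 4) * c ^ 2 / r +
      (c * q + 11 / 10 * (1 + 1 / (r / 4)) * (c * q) ^ 2 * (5 / 2))) =
      c * ((r + 4) * (3 * r ^ 2 + 152 * r + 72) / (160 * (r + 1) * (r + 2) ^ 2)) := by
    subst hc hq
    field_simp
    ring
  rw [← sub_nonneg, hgap, hc]
  positivity

variable {Ω : Type*} [TopologicalSpace Ω] [CompactSpace Ω] [MeasurableSpace Ω]
  [OpensMeasurableSpace Ω] {μ : Measure Ω} [IsProbabilityMeasure μ] {f g : Ω → ℝ}

theorem integral_exp_mul_add_le (hf : Continuous f) (hg : Continuous g)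
    (hmean : ∫ ω, f ω ∂μ = 0) (hf_le : ∀ ω, f ω ≤ 5 / 2) (hg₀ : ∀ ω, 0 ≤ g ω)
    (hg_le : ∀ ω, g ω ≤ 5 / 2) {r : ℝ} (hr : 0 < r)
    (hfg : r * ∫ ω, f ω ^ 2 ∂μ ≤ ∫ ω, g ω ∂μ) {c q : ℝ} (hc : c = r / (2 * (r + 1)))
    (hq : q = r / (2 * (r + 2))) :
    ∫ ω, Real.exp (c * f ω + c * q * g ω) ∂μ ≤ 1 + c * ∫ ω, g ω ∂μ := by
  have hc₀ : 0 ≤ c := hc ▸ by positivity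
  have hc₁ : c ≤ 1 / 2 := by rw [hc, div_le_div_iff₀ (by positivity) two_pos]; linarith
  have hq₀ : 0 ≤ q := hq ▸ by positivity
  have hq₁ : q ≤ 1 / 2 := by rw [hq, div_le_div_iff₀ (by positivity) two_pos]; linarith
  have hcoeff := sum_coefficients_le hr hc hq
  set A := 11 / 10 * (1 + r / 4) * c ^ 2
  set B := c * q + 11 / 10 * (1 + 1 / (r / 4)) * (c * q) ^ 2 * (5 / 2)
  have hA : 0 ≤ A := by positivity
  have hG : 0 ≤ ∫ ω, g ω ∂μ := integral_nonneg hg₀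
  calc ∫ ω, Real.exp (c * f ω + c * q * g ω) ∂μ
      ≤ ∫ ω, (1 + c * f ω + A * f ω ^ 2 + B * g ω) ∂μ :=
        integral_mono (integrable_of_continuous (by fun_prop))
          (integrable_of_continuous (by fun_prop)) fun ω =>
            exp_mul_add_le (hf_le ω) (hg₀ ω) (hg_le ω) hc₀ hc₁ hq₀ hq₁ (by positivity)
    _ = 1 + A * ∫ ω, f ω ^ 2 ∂μ + B * ∫ ω, g ω ∂μ := by
        rw [integral_add (integrable_of_continuous (by fun_prop))
          (integrable_of_continuous (by fun_prop)), integral_add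
          (integrable_of_continuous (by fun_prop)) (integrable_of_continuous (by fun_prop)),
          integral_add (integrable_const _) (integrable_of_continuous (by fun_prop))]
        simp [integral_const_mul, hmean]
    _ ≤ 1 + A * ((∫ ω, g ω ∂μ) / r) + B * ∫ ω, g ω ∂μ := by
        linarith [mul_le_mul_of_nonneg_left ((le_div_iff₀' hr).2 hfg) hA]
    _ = 1 + (A / r + B) * ∫ ω, g ω ∂μ := by ring
    _ ≤ 1 + c * ∫ ω, g ω ∂μ := by gcongr

theorem integral_exp_le_exp_integral_of_integral_exp_le_pow {n : ℕ} (hn : 2 ≤ n)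
    (hf : Continuous f) (hg : Continuous g) (hmean : ∫ ω, f ω ∂μ = 0)
    (hf_le : ∀ ω, f ω ≤ 5 / 2) (hg₀ : ∀ ω, 0 ≤ g ω) (hg_le : ∀ ω, g ω ≤ 5 / 2)
    (h : ∀ ⦃s : ℝ⦄, 0 ≤ s → s < 1 → ∫ ω, Real.exp (n * s * f ω) ∂μ ≤
      (∫ ω, Real.exp (s * f ω + s ^ 2 / (2 * (1 - s)) * g ω) ∂μ) ^ n) :
    ∫ ω, Real.exp (((n : ℝ) - 1) / 2 * f ω) ∂μ ≤
      Real.exp (((n : ℝ) - 1) / 2 * ∫ ω, g ω ∂μ) := by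
  have hpoincare :=
    sub_one_mul_integral_sq_le_of_integral_exp_le_pow (by lia : n ≠ 0) hf hg hmean h
  obtain ⟨r, hr, hnr⟩ : ∃ r : ℝ, 0 < r ∧ (n : ℝ) = r + 1 :=
    ⟨n - 1, sub_pos.2 (by exact_mod_cast hn), by ring⟩
  rw [show (n : ℝ) - 1 = r by linarith] at hpoincare ⊢
  set c := r / (2 * (r + 1)) with hc
  have hc₁ : 1 - c = (r + 2) / (2 * (r + 1)) := by rw [hc]; field_simp; ring
  have hcq : c ^ 2 / (2 * (1 - c)) = c * (r / (2 * (r + 2))) := by rw [hc₁, hc]; field_simp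
  have hnc : (n : ℝ) * c = r / 2 := by rw [hnr, hc]; field_simp
  have hle := h (s := c) (by positivity) (sub_pos.1 (hc₁ ▸ by positivity))
  rw [hcq, hnc] at hle
  calc ∫ ω, Real.exp (r / 2 * f ω) ∂μ
      ≤ (∫ ω, Real.exp (c * f ω + c * (r / (2 * (r + 2))) * g ω) ∂μ) ^ n := hle
    _ ≤ Real.exp (c * ∫ ω, g ω ∂μ) ^ n := by
      refine pow_le_pow_left₀ (integral_nonneg fun ω => (Real.exp_pos _).le) ?_ n
      linarith [integral_exp_mul_add_le hf hg hmean hf_le hg₀ hg_le hr hpoincare hc rfl,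
        Real.add_one_le_exp (c * ∫ ω, g ω ∂μ)]
    _ = Real.exp (r / 2 * ∫ ω, g ω ∂μ) := by rw [← Real.exp_nat_mul, ← mul_assoc, hnc]

end ExponentialBound

theorem pi_sq_div_four_le_five_halves : Real.pi ^ 2 / 4 ≤ 5 / 2 := by
  nlinarith [Real.pi_pos, Real.pi_lt_d2]

/-- **Corollary 3.2, (3.2) (Statement 6).** Sharpened exponential bound on the sphere
via the spherical Hessian. -/
theorem log_exp_bound_spherical_hessian
    {n : ℕ} (hn : 2 ≤ n) (f : E n → ℝ) (U : Set (E n)) (hU : IsOpen U)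
    (hUS : Metric.sphere (0 : E n) 1 ⊆ U) (hf : ContDiffOn ℝ 2 f U)
    (hmean : ∫ θ, f θ ∂sphMeasure n = 0)
    (hop : ∀ θ ∈ Metric.sphere (0 : E n) 1, ‖sHess f θ‖ ≤ 1) :
    Real.log (∫ θ, Real.exp (((n : ℝ) - 1) / 2 * f θ) ∂sphMeasure n) ≤
      ((n : ℝ) - 1) / 2 * ∫ θ, ‖sgrad f θ‖ ^ 2 ∂sphMeasure n := by
  have : Nontrivial (E n) := Module.nontrivial_of_finrank_pos (R := ℝ)
    (by rw [finrank_euclideanSpace_fin]; exact two_pos.trans_le hn)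
  have htaylor : SphericalTaylorBound 1 f := sphericalTaylorBound_of_norm_sHess_le hU hUS hf hop
  have hcont : Continuous fun θ : sphere (0 : E n) 1 => f θ :=
    (hf.continuousOn.mono hUS).domRestrict
  have hgrad : Continuous fun θ : sphere (0 : E n) 1 => sgrad f θ :=
    ((continuousOn_sgrad hU hf).mono hUS).domRestrict
  have hf_le (θ : sphere (0 : E n) 1) : f θ ≤ 5 / 2 := by
    linarith [htaylor.le_of_integral_eq_zero hn hcont (integral_sphMeasure f ▸ hmean)
      (norm_eq_of_mem_sphere θ), pi_sq_div_four_le_five_halves]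
  have hgrad_le (θ : sphere (0 : E n) 1) : ‖sgrad f θ‖ ^ 2 ≤ 5 / 2 :=
    (pow_le_pow_left₀ (norm_nonneg _) (htaylor.norm_sgrad_le zero_le_one
      (norm_eq_of_mem_sphere θ)) 2).trans (by linarith [pi_sq_div_four_le_five_halves])
  rw [integral_sphMeasure] at hmean
  rw [integral_sphMeasure, integral_sphMeasure fun θ => ‖sgrad f θ‖ ^ 2, Real.log_le_iff_le_exp
    (integral_exp_pos (integrable_of_continuous (hcont.const_mul _).rexp))]
  exact integral_exp_le_exp_integral_of_integral_exp_le_pow hn hcont (hgrad.norm.pow 2) hmean hf_le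
    (fun θ => sq_nonneg _) hgrad_le fun s hs hs₁ => by
      simpa using htaylor.integral_exp_le_integral_exp_pow hn hcont hgrad hs (by rwa [mul_one])

end SecondOrderConc
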